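/- arXiv:math/0408090 — 4 statements merged into one kernel-verified Lean document; each statement's English description precedes it below -/
import Mathlib

section
/- For every ρ > 0 there is a Borel subset Ω_ρ of X with μ(Ω_ρ) > 1 - ρ such that: for every ε > 0 and every compact subset K of X with μ(K) > 1 - ε, there exists L₀ > 0 such that for all ω ∈ Ω_ρ and all L > L₀, the Lebesgue measure of { s ∈ [-L, L] : dist(φ_s(ω), K) < ε } is greater than (1 - ε)·2L. -/
open MeasureTheory

namespace UnifGen

/-- Maximal function. -/
noncomputable def maxFn {X : Type*} (T : X → X) (G : X → ℝ) : ℕ → X → ℝ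
  | 0 => fun _ => 0
  | (n+1) => fun x => max 0 (G x + maxFn T G n (T x))

variable {X : Type*}

lemma maxFn_nonneg (T : X → X) (G : X → ℝ) (n : ℕ) (x : X) : 0 ≤ maxFn T G n x := by
  cases n with
  | zero => simp [maxFn]
  | succ n => simp [maxFn]

lemma maxFn_succ_le (T : X → X) (G : X → ℝ) (n : ℕ) (x : X) :
    maxFn T G n x ≤ maxFn T G (n+1) x := by
  induction n generalizing x with
  | zero => exact maxFn_nonneg _ _ _ _
  | succ n ih =>
    have := ih (T x)
    show max 0 (G x + maxFn T G n (T x)) ≤ max 0 (G x + maxFn T G (n+1) (T x))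
    gcongr

lemma le_maxFn (T : X → X) (G : X → ℝ) (S : ℕ → X → ℝ) (hS0 : ∀ x, S 0 x = 0)
    (hS : ∀ n x, S (n+1) x = G x + S n (T x)) (n : ℕ) (x : X) :
    S n x ≤ maxFn T G n x := by
  induction n generalizing x with
  | zero => simp [hS0, maxFn]
  | succ n ih =>
    rw [hS]
    exact le_trans (by gcongr; exact ih _) (le_max_right _ _)

lemma maxFn_le (T : X → X) (G : X → ℝ) (C : ℝ) (hC : ∀ x, |G x| ≤ C) (n : ℕ) (x : X) :
    maxFn T G n x ≤ n * C := by
  induction n generalizing x with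
  | zero => simp [maxFn]
  | succ n ih =>
    have h1 := ih (T x)
    have h2 := abs_le.1 (hC x)
    have h3 := maxFn_nonneg T G n (T x)
    show max 0 (G x + maxFn T G n (T x)) ≤ _
    push_cast
    apply max_le <;> linarith

lemma maximal [MeasurableSpace X] (μ : Measure X) [IsProbabilityMeasure μ]
    (T : X → X) (hT : MeasurePreserving T μ μ) (G : X → ℝ) (hG : Measurable G)
    (C : ℝ) (hC : ∀ x, |G x| ≤ C)
    (S : ℕ → X → ℝ) (hS0 : ∀ x, S 0 x = 0)
    (hS : ∀ n x, S (n+1) x = G x + S n (T x))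
    (hpos : ∀ᵐ x ∂μ, ∃ n, 0 < S n x) : 0 ≤ ∫ x, G x ∂μ := by
  have hM : ∀ n, Measurable (maxFn T G n) := by
    intro n
    induction n with
    | zero => exact measurable_const
    | succ n ih => exact measurable_const.max (hG.add (ih.comp hT.measurable))
  have hMi : ∀ n, Integrable (maxFn T G n) μ := by
    intro n
    refine Integrable.of_bound (hM n).aestronglyMeasurable (n * C) (Filter.Eventually.of_forall ?_)
    intro x
    rw [Real.norm_eq_abs, abs_of_nonneg (maxFn_nonneg _ _ _ _)]
    exact maxFn_le T G C hC n x
  have hGi : Integrable G μ :=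
    Integrable.of_bound hG.aestronglyMeasurable C (Filter.Eventually.of_forall hC)
  have hA : ∀ n, MeasurableSet {x | 0 < maxFn T G n x} := fun n =>
    measurableSet_lt measurable_const (hM n)
  have key : ∀ n, 0 ≤ ∫ x in {x | 0 < maxFn T G n x}, G x ∂μ := by
    intro n
    have h1 : ∫ x, (maxFn T G n x - maxFn T G n (T x)) ∂μ = 0 := by
      have hi : Integrable (fun x => maxFn T G n (T x)) μ :=
        hT.integrable_comp_of_integrable (hMi n)
      rw [integral_sub (hMi n) hi]
      have : ∫ x, maxFn T G n (T x) ∂μ = ∫ x, maxFn T G n x ∂μ := by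
        conv_rhs => rw [← hT.map_eq]
        rw [integral_map hT.measurable.aemeasurable (hM n).aestronglyMeasurable]
      rw [this, sub_self]
    rw [← integral_indicator (hA n)]
    refine h1.symm.le.trans ?_
    refine integral_mono ((hMi n).sub (hT.integrable_comp_of_integrable (hMi n)))
      (hGi.indicator (hA n)) ?_
    intro x
    by_cases hx : 0 < maxFn T G n x
    · rw [Set.indicator_of_mem (by exact hx)]
      cases n with
      | zero => simp [maxFn] at hx
      | succ n =>
        have h2 := maxFn_succ_le T G n (T x)
        have h3 : maxFn T G (n+1) x = max 0 (G x + maxFn T G n (T x)) := rfl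
        have h4 : maxFn T G (n+1) x ≤ G x + maxFn T G n (T x) := by
          rw [h3] at hx ⊢
          rcases lt_max_iff.1 hx with h | h
          · exact absurd h (lt_irrefl _)
          · exact max_le h.le le_rfl
        show maxFn T G (n+1) x - maxFn T G (n+1) (T x) ≤ G x
        linarith
    · rw [Set.indicator_of_notMem (by exact hx)]
      have := maxFn_nonneg T G n (T x)
      show maxFn T G n x - maxFn T G n (T x) ≤ 0
      linarith [not_lt.1 hx]
  have hmono : Monotone fun n => {x | 0 < maxFn T G n x} :=
    monotone_nat_of_le_succ fun n x hx => lt_of_lt_of_le hx (maxFn_succ_le T G n x)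
  have hlim := tendsto_setIntegral_of_monotone (μ := μ) hA hmono hGi.integrableOn
  have h0 := ge_of_tendsto' hlim key
  have hun : (⋃ n, {x | 0 < maxFn T G n x} : Set X) =ᵐ[μ] Set.univ := by
    rw [ae_eq_univ, ← mem_ae_iff]
    filter_upwards [hpos] with x ⟨n, hn⟩
    exact Set.mem_iUnion.2 ⟨n, lt_of_lt_of_le hn (le_maxFn T G S hS0 hS n x)⟩
  rwa [setIntegral_congr_set hun, setIntegral_univ] at h0

/-- The indicator along an orbit. -/
noncomputable def ind (φ : ℝ → X → X) (U : Set X) (x : X) (s : ℝ) : ℝ :=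
  U.indicator (fun _ => (1:ℝ)) (φ s x)

lemma ind_nonneg (φ : ℝ → X → X) (U : Set X) (x : X) (s : ℝ) : 0 ≤ ind φ U x s :=
  Set.indicator_nonneg (fun _ _ => zero_le_one) _

lemma ind_le (φ : ℝ → X → X) (U : Set X) (x : X) (s : ℝ) : ind φ U x s ≤ 1 :=
  Set.indicator_le_self' (fun _ _ => zero_le_one) _

lemma ind_abs (φ : ℝ → X → X) (U : Set X) (x : X) (s : ℝ) : |ind φ U x s| ≤ 1 := by
  rw [abs_of_nonneg (ind_nonneg _ _ _ _)]; exact ind_le _ _ _ _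

section
variable [MeasurableSpace X] {φ : ℝ → X → X} (hmeas : Measurable fun p : ℝ × X => φ p.1 p.2)
  {U : Set X} (hU : MeasurableSet U)
include hmeas hU

lemma meas_ind : Measurable fun p : X × ℝ => ind φ U p.1 p.2 :=
  (measurable_const.indicator hU).comp (hmeas.comp measurable_swap)

lemma meas_ind_right (x : X) : Measurable (ind φ U x) :=
  (meas_ind hmeas hU).comp measurable_prodMk_left

lemma ii (x : X) (a b : ℝ) : IntervalIntegrable (ind φ U x) volume a b := by
  rw [intervalIntegrable_iff, Set.uIoc]
  refine Integrable.of_bound (meas_ind_right hmeas hU x).aestronglyMeasurable 1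
    (Filter.Eventually.of_forall fun s => ind_abs φ U x s)

lemma meas_I (a b : ℝ) : Measurable fun x => ∫ s in a..b, ind φ U x s := by
  simp only [intervalIntegral]
  exact ((meas_ind hmeas hU).stronglyMeasurable.integral_prod_right'.measurable).sub
    ((meas_ind hmeas hU).stronglyMeasurable.integral_prod_right'.measurable)

omit hmeas hU in
omit [MeasurableSpace X] in
lemma I_abs (x : X) (a b : ℝ) : |∫ s in a..b, ind φ U x s| ≤ |b - a| := by
  have := intervalIntegral.norm_integral_le_of_norm_le_const (a := a) (b := b) (C := 1)
    (f := ind φ U x) (fun s _ => ind_abs φ U x s)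
  simpa using this

omit hmeas hU in
omit [MeasurableSpace X] in
lemma I_shift (hadd : ∀ s t : ℝ, φ (s + t) = φ s ∘ φ t) (x : X) (t n : ℝ) :
    ∫ s in (0:ℝ)..n, ind φ U (φ t x) s = ∫ s in t..(n+t), ind φ U x s := by
  have : ∀ s, ind φ U (φ t x) s = ind φ U x (s + t) := fun s => by
    simp [ind, hadd]
  simp only [this]
  rw [intervalIntegral.integral_comp_add_right (fun s => ind φ U x s) t, zero_add]

lemma I_diff (hadd : ∀ s t : ℝ, φ (s + t) = φ s ∘ φ t) (x : X) (t n : ℝ) :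
    ∫ s in (0:ℝ)..n, ind φ U (φ t x) s ≤ (∫ s in (0:ℝ)..n, ind φ U x s) + 2 * |t| := by
  rw [I_shift hadd]
  have h1 := intervalIntegral.integral_add_adjacent_intervals (ii hmeas hU x 0 n)
    (ii hmeas hU x n (n+t))
  have h2 := intervalIntegral.integral_add_adjacent_intervals (ii hmeas hU x 0 t)
    (ii hmeas hU x t (n+t))
  have h3 := abs_le.1 (I_abs (φ := φ) (U := U) x n (n+t))
  have h4 := abs_le.1 (I_abs (φ := φ) (U := U) x 0 t)
  simp only [add_sub_cancel_left, sub_zero] at h3 h4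
  linarith [h3.2, h4.1]

lemma liminf_ge (h0 : φ 0 = id) (hadd : ∀ s t : ℝ, φ (s + t) = φ s ∘ φ t)
    (μ : Measure X) [IsProbabilityMeasure μ]
    (hinv : ∀ s : ℝ, Measure.map (φ s) μ = μ)
    (herg : ∀ A : Set X, MeasurableSet A → (∀ s : ℝ, φ s ⁻¹' A = A) → μ A = 0 ∨ μ A = 1)
    (c : ℝ) (hc : c < μ.real U) :
    ∀ᵐ x ∂μ, ∃ N : ℕ, ∀ n : ℕ, N ≤ n → c * n ≤ ∫ s in (0:ℝ)..n, ind φ U x s := by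
  obtain ⟨c', hcc', hc'⟩ := exists_between hc
  obtain ⟨k, hk⟩ := exists_nat_one_div_lt (sub_pos.2 hcc')
  let B : Set X := {x | ∃ k : ℕ, ∀ N : ℕ, ∃ n : ℕ, N ≤ n ∧
    ∫ s in (0:ℝ)..n, ind φ U x s < (c' - 1 / ((k:ℝ)+1)) * n}
  have hφ : ∀ s, Measurable (φ s) := fun s => hmeas.comp measurable_prodMk_left
  have hB : MeasurableSet B := by
    have : B = ⋃ k : ℕ, ⋂ N : ℕ, ⋃ n : ℕ, ⋃ _ : N ≤ n, {x |
      ∫ s in (0:ℝ)..n, ind φ U x s < (c' - 1 / ((k:ℝ)+1)) * n} := by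
      ext x; simp [B]
    rw [this]
    exact MeasurableSet.iUnion fun k => MeasurableSet.iInter fun N => MeasurableSet.iUnion fun n =>
      MeasurableSet.iUnion fun _ => measurableSet_lt (meas_I hmeas hU _ _) measurable_const
  have hBinv : ∀ t x, x ∈ B → φ t x ∈ B := by
    rintro t x ⟨k, hk⟩
    refine ⟨k+1, fun N => ?_⟩
    have hd : 0 < 1 / ((k:ℝ)+1) - 1 / (((k+1:ℕ):ℝ)+1) := by
      rw [sub_pos]
      apply one_div_lt_one_div_of_lt
      · positivity
      · push_cast; linarith
    obtain ⟨M, hM⟩ := exists_nat_gt (2 * |t| / (1 / ((k:ℝ)+1) - 1 / (((k+1:ℕ):ℝ)+1)))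
    obtain ⟨n, hn, hlt⟩ := hk (max N M)
    refine ⟨n, le_trans (le_max_left _ _) hn, ?_⟩
    have h1 := I_diff hmeas hU hadd x t n
    have h2 : (M:ℝ) ≤ n := by exact_mod_cast le_trans (le_max_right _ _) hn
    rw [div_lt_iff₀ hd] at hM
    have h3 := mul_le_mul_of_nonneg_right h2 hd.le
    nlinarith
  have hBeq : ∀ t, φ t ⁻¹' B = B := by
    intro t
    ext x
    refine ⟨fun h => ?_, fun h => hBinv t x h⟩
    have := hBinv (-t) _ h
    rwa [← Function.comp_apply (f := φ (-t)), ← hadd, neg_add_cancel, h0] at this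
  rcases herg B hB hBeq with h | h
  · have : ∀ᵐ x ∂μ, x ∉ B := measure_eq_zero_iff_ae_notMem.1 h
    filter_upwards [this] with x hx
    have : ¬ ∀ N : ℕ, ∃ n : ℕ, N ≤ n ∧
      ∫ s in (0:ℝ)..n, ind φ U x s < (c' - 1 / ((k:ℝ)+1)) * n := fun h => hx ⟨k, h⟩
    push Not at this
    obtain ⟨N, hN⟩ := this
    refine ⟨N, fun n hn => le_trans ?_ (hN n hn)⟩
    gcongr
    linarith
  · exfalso
    have hae : ∀ᵐ x ∂μ, x ∈ B := (prob_compl_eq_zero_iff hB).2 h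
    have hmp : MeasurePreserving (φ 1) μ μ := ⟨hφ 1, hinv 1⟩
    have hmax := maximal μ (φ 1) hmp (fun x => c' - ∫ s in (0:ℝ)..1, ind φ U x s)
      (measurable_const.sub (meas_I hmeas hU _ _)) (|c'| + 1)
      (fun x => (abs_sub _ _).trans (by
        have := I_abs (φ := φ) (U := U) x 0 1
        simp only [sub_zero, abs_one] at this
        linarith))
      (fun n x => c' * n - ∫ s in (0:ℝ)..n, ind φ U x s) (fun x => by simp)
      (fun n x => by
        have h1 := I_shift (U := U) hadd x 1 n
        have h2 := intervalIntegral.integral_add_adjacent_intervals (ii hmeas hU x 0 1)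
          (ii hmeas hU x 1 (n+1))
        push_cast
        rw [h1, ← h2]; ring)
      (by
        filter_upwards [hae] with x ⟨k, hk⟩
        obtain ⟨n, hn, hlt⟩ := hk 1
        refine ⟨n, ?_⟩
        have : 0 ≤ 1 / ((k:ℝ)+1) * n := by positivity
        nlinarith)
    have hint : Integrable (fun x => ∫ s in (0:ℝ)..1, ind φ U x s) μ :=
      Integrable.of_bound (meas_I hmeas hU _ _).aestronglyMeasurable 1
        (Filter.Eventually.of_forall fun x => by simpa using I_abs (φ := φ) (U := U) x 0 1)
    rw [integral_sub (integrable_const _) hint] at hmax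
    have hfub : ∫ x, (∫ s in (0:ℝ)..1, ind φ U x s) ∂μ = μ.real U := by
      simp only [intervalIntegral.integral_of_le zero_le_one]
      rw [integral_integral_swap]
      · have : ∀ s, ∫ x, ind φ U x s ∂μ = μ.real U := by
          intro s
          have h1 : (fun x => ind φ U x s) = (φ s ⁻¹' U).indicator (fun _ => (1:ℝ)) := by
            ext x; rfl
          rw [h1, integral_indicator_const _ (hφ s hU), smul_eq_mul, mul_one, measureReal_def,
            ← Measure.map_apply (hφ s) hU, hinv, measureReal_def]
        simp [this]
      · exact Integrable.of_bound (meas_ind hmeas hU).aestronglyMeasurable 1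
          (Filter.Eventually.of_forall fun p => ind_abs φ U p.1 p.2)
    rw [hfub] at hmax
    simp at hmax
    linarith

lemma two_sided (h0 : φ 0 = id) (hadd : ∀ s t : ℝ, φ (s + t) = φ s ∘ φ t)
    (μ : Measure X) [IsProbabilityMeasure μ]
    (hinv : ∀ s : ℝ, Measure.map (φ s) μ = μ)
    (herg : ∀ A : Set X, MeasurableSet A → (∀ s : ℝ, φ s ⁻¹' A = A) → μ A = 0 ∨ μ A = 1)
    (c : ℝ) (hc : c < μ.real U) :
    ∀ᵐ x ∂μ, ∃ N : ℕ, ∀ n : ℕ, N ≤ n → c * (2 * n) ≤ ∫ s in (-n:ℝ)..n, ind φ U x s := by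
  have h1 := liminf_ge hmeas hU h0 hadd μ hinv herg c hc
  have h2 := liminf_ge (φ := fun s => φ (-s))
    (hmeas.comp ((measurable_fst.neg).prodMk measurable_snd)) hU (by simpa using h0)
    (fun s t => by rw [neg_add, hadd]) μ (fun s => hinv _)
    (fun A hA h => herg A hA fun s => by simpa using h (-s)) c hc
  filter_upwards [h1, h2] with x ⟨N, hN⟩ ⟨M, hM⟩
  refine ⟨max N M, fun n hn => ?_⟩
  have h3 := hN n (le_trans (le_max_left _ _) hn)
  have h4 := hM n (le_trans (le_max_right _ _) hn)
  have h5 : ∫ s in (0:ℝ)..n, ind (fun s => φ (-s)) U x s = ∫ s in (-n:ℝ)..0, ind φ U x s := by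
    have := intervalIntegral.integral_comp_neg (a := 0) (b := n) (ind φ U x)
    rw [neg_zero] at this
    exact this
  have h6 := intervalIntegral.integral_add_adjacent_intervals (ii hmeas hU x (-n) 0)
    (ii hmeas hU x 0 n)
  linarith

lemma egorov (h0 : φ 0 = id) (hadd : ∀ s t : ℝ, φ (s + t) = φ s ∘ φ t)
    (μ : Measure X) [IsProbabilityMeasure μ]
    (hinv : ∀ s : ℝ, Measure.map (φ s) μ = μ)
    (herg : ∀ A : Set X, MeasurableSet A → (∀ s : ℝ, φ s ⁻¹' A = A) → μ A = 0 ∨ μ A = 1)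
    (c : ℝ) (δ : ENNReal) (hδ : 0 < δ) :
    ∃ E : Set X, MeasurableSet E ∧ μ Eᶜ ≤ δ ∧ (c < μ.real U → ∃ N : ℕ, ∀ x ∈ E,
      ∀ n : ℕ, N ≤ n → c * (2 * n) ≤ ∫ s in (-n:ℝ)..n, ind φ U x s) := by
  by_cases hc : c < μ.real U
  swap
  · exact ⟨Set.univ, MeasurableSet.univ, by simp, fun h => absurd h hc⟩
  have hae := two_sided hmeas hU h0 hadd μ hinv herg c hc
  let E : ℕ → Set X := fun N => {x | ∀ n : ℕ, N ≤ n → c * (2 * n) ≤ ∫ s in (-n:ℝ)..n, ind φ U x s}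
  have hE : ∀ N, MeasurableSet (E N) := by
    intro N
    have : E N = ⋂ n : ℕ, ⋂ _ : N ≤ n, {x | c * (2 * n) ≤ ∫ s in (-n:ℝ)..n, ind φ U x s} := by
      ext x; simp [E]
    rw [this]
    exact MeasurableSet.iInter fun n => MeasurableSet.iInter fun _ =>
      measurableSet_le measurable_const (meas_I hmeas hU _ _)
  have hanti : Antitone fun N => (E N)ᶜ := fun N M h =>
    Set.compl_subset_compl.2 fun x hx n hn => hx n (h.trans hn)
  have hlim := tendsto_measure_iInter_atTop (μ := μ) (fun N => (hE N).compl.nullMeasurableSet) hanti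
    ⟨0, measure_ne_top _ _⟩
  have hz : μ (⋂ N, (E N)ᶜ) = 0 := by
    rw [← Set.compl_iUnion, ← mem_ae_iff]
    filter_upwards [hae] with x ⟨N, hN⟩
    exact Set.mem_iUnion.2 ⟨N, hN⟩
  rw [hz] at hlim
  obtain ⟨N, hN⟩ := (hlim.eventually_lt_const hδ).exists
  exact ⟨E N, hE N, hN.le, fun _ => ⟨N, fun x hx => hx⟩⟩

lemma vol_eq (x : X) (L : ℝ) (hL : 0 ≤ L) :
    ∫ s in (-L)..L, ind φ U x s = volume.real ({s | φ s x ∈ U} ∩ Set.Ioc (-L) L) := by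
  have hm : MeasurableSet {s | φ s x ∈ U} := (hmeas.comp measurable_prodMk_right) hU
  rw [intervalIntegral.integral_of_le (by linarith)]
  have h1 : ind φ U x = {s | φ s x ∈ U}.indicator (fun _ => (1:ℝ)) := by
    ext s; simp [ind, Set.indicator]
  rw [h1, integral_indicator_const _ hm, smul_eq_mul, mul_one, measureReal_restrict_apply hm]

end

end UnifGen

open UnifGen in
/-- Lemma `UnifGeneric`: existence of uniformly generic sets for an ergodic
measurable flow on a Polish metric space. -/
theorem exists_uniformly_generic_set
    {X : Type*} [MetricSpace X] [PolishSpace X] [MeasurableSpace X] [BorelSpace X]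
    (φ : ℝ → X → X) (hmeas : Measurable fun p : ℝ × X => φ p.1 p.2)
    (h0 : φ 0 = id) (hadd : ∀ s t : ℝ, φ (s + t) = φ s ∘ φ t)
    (μ : Measure X) [IsProbabilityMeasure μ]
    (hinv : ∀ s : ℝ, Measure.map (φ s) μ = μ)
    (herg : ∀ A : Set X, MeasurableSet A → (∀ s : ℝ, φ s ⁻¹' A = A) → μ A = 0 ∨ μ A = 1) :
    ∀ ρ : ℝ, 0 < ρ →
      ∃ Ω : Set X, MeasurableSet Ω ∧ 1 - ENNReal.ofReal ρ < μ Ω ∧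
        ∀ ε : ℝ, 0 < ε → ∀ K : Set X, IsCompact K → 1 - ENNReal.ofReal ε < μ K →
          ∃ L₀ : ℝ, 0 < L₀ ∧ ∀ ω ∈ Ω, ∀ L : ℝ, L₀ < L →
            ENNReal.ofReal ((1 - ε) * (2 * L)) <
              volume {s : ℝ | s ∈ Set.Icc (-L) L ∧ Metric.infDist (φ s ω) K < ε} := by
  intro ρ hρ
  let V : Finset (TopologicalSpace.countableBasis X) → Set X := fun F => ⋃ b ∈ F, (b : Set X)
  have hVo : ∀ F, IsOpen (V F) := fun F => isOpen_biUnion fun b _ =>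
    TopologicalSpace.isOpen_of_mem_countableBasis b.2
  have : Countable (TopologicalSpace.countableBasis X) :=
    (TopologicalSpace.countable_countableBasis X).to_subtype
  have hρ' : min (ENNReal.ofReal ρ) 1 ≠ 0 := by
    simp [hρ]
  obtain ⟨δ, hδ, hsum⟩ := ENNReal.exists_pos_sum_of_countable' hρ'
    (Finset (TopologicalSpace.countableBasis X) × ℚ)
  have hE := fun i : Finset (TopologicalSpace.countableBasis X) × ℚ =>
    egorov hmeas (hVo i.1).measurableSet h0 hadd μ hinv herg i.2 (δ i) (hδ i)
  choose E hEm hEμ hEN using hE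
  have hΩm : MeasurableSet (⋂ i, E i) := MeasurableSet.iInter hEm
  refine ⟨⋂ i, E i, hΩm, ?_, ?_⟩
  · have h1 : μ (⋂ i, E i)ᶜ < min (ENNReal.ofReal ρ) 1 := by
      rw [Set.compl_iInter]
      exact lt_of_le_of_lt ((measure_iUnion_le _).trans (ENNReal.tsum_le_tsum hEμ)) hsum
    have h2 : μ (⋂ i, E i) = 1 - μ (⋂ i, E i)ᶜ := by
      have := prob_compl_eq_one_sub (μ := μ) hΩm.compl
      rwa [compl_compl] at this
    rw [h2]
    rcases le_or_gt (ENNReal.ofReal ρ) 1 with h | h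
    · rw [min_eq_left h] at h1
      exact by
        have hne := (lt_of_lt_of_le h1 h).le
        rw [ENNReal.sub_lt_iff_lt_right ENNReal.ofReal_ne_top h]
        calc (1 : ENNReal) = 1 - μ (⋂ i, E i)ᶜ + μ (⋂ i, E i)ᶜ := (tsub_add_cancel_of_le hne).symm
          _ < _ := ENNReal.add_lt_add_left (by simp) h1
    · rw [tsub_eq_zero_of_le h.le]
      exact tsub_pos_of_lt (lt_of_lt_of_le h1 (min_le_right _ _))
  intro ε hε K hK hμK
  -- choose the neighbourhood
  have hF : ∃ F, K ⊆ V F ∧ V F ⊆ Metric.thickening ε K := by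
    have hb := TopologicalSpace.isBasis_countableBasis X
    have hloc : ∀ x : K, ∃ b : TopologicalSpace.countableBasis X, (x:X) ∈ (b:Set X) ∧
        (b:Set X) ⊆ Metric.thickening ε K := by
      intro x
      obtain ⟨b, hb1, hb2, hb3⟩ := hb.exists_subset_of_mem_open
        (Metric.self_subset_thickening hε K x.2) Metric.isOpen_thickening
      exact ⟨⟨b, hb1⟩, hb2, hb3⟩
    choose b hb1 hb2 using hloc
    obtain ⟨t, ht⟩ := hK.elim_finite_subcover (fun x : K => (b x : Set X))
      (fun x => TopologicalSpace.isOpen_of_mem_countableBasis (b x).2)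
      (fun x hx => Set.mem_iUnion.2 ⟨⟨x, hx⟩, hb1 _⟩)
    classical
    refine ⟨t.image b, fun x hx => ?_, fun x hx => ?_⟩
    · obtain ⟨y, hy, hxy⟩ := Set.mem_iUnion₂.1 (ht hx)
      exact Set.mem_iUnion₂.2 ⟨b y, Finset.mem_image_of_mem _ hy, hxy⟩
    · obtain ⟨c, hc, hxc⟩ := Set.mem_iUnion₂.1 hx
      obtain ⟨y, _, rfl⟩ := Finset.mem_image.1 hc
      exact hb2 y hxc
  obtain ⟨F, hKF, hFt⟩ := hF
  have hKne : K.Nonempty := by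
    rw [Set.nonempty_iff_ne_empty]
    rintro rfl
    simp at hμK
  have ha : max 0 (1 - ε) < μ.real (V F) := by
    have h1 : 1 - ENNReal.ofReal ε < μ (V F) := lt_of_lt_of_le hμK (measure_mono hKF)
    rw [← ENNReal.ofReal_one, ← ENNReal.ofReal_sub _ hε.le] at h1
    have h2 : 0 < μ (V F) := lt_of_le_of_lt zero_le h1
    refine max_lt (ENNReal.toReal_pos h2.ne' (measure_ne_top _ _)) ?_
    exact by
      by_contra hcon
      have := ENNReal.ofReal_le_ofReal (not_lt.1 hcon)
      rw [measureReal_def, ENNReal.ofReal_toReal (measure_ne_top _ _)] at this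
      exact absurd h1 (not_lt.2 this)
  obtain ⟨c, hac, hc⟩ := exists_rat_btwn ha
  obtain ⟨N, hN⟩ := hEN (F, c) hc
  set a := max 0 (1 - ε) with ha_def
  have ha0 : 0 ≤ a := le_max_left _ _
  have ha1 : 1 - ε ≤ a := le_max_right _ _
  have hd : 0 < (c:ℝ) - a := sub_pos.2 hac
  have hc0 : 0 < (c:ℝ) := lt_of_le_of_lt ha0 hac
  refine ⟨c / (c - a) + N + 1, by positivity, fun ω hω L hL => ?_⟩
  have hq : 0 < (c:ℝ) / (c - a) := by positivity
  have hNn : (0:ℝ) ≤ N := Nat.cast_nonneg N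
  have hL0 : 0 < L := by linarith
  have hfl := Nat.floor_le hL0.le
  have hfl2 := Nat.lt_floor_add_one L
  have hNfl : N ≤ ⌊L⌋₊ := Nat.le_floor (by linarith)
  have h1 := hN ω (Set.mem_iInter.1 hω (F, c)) ⌊L⌋₊ hNfl
  have hUm := (hVo F).measurableSet
  rw [vol_eq hmeas hUm ω _ (Nat.cast_nonneg _)] at h1
  have hsub : {s | φ s ω ∈ V F} ∩ Set.Ioc (-(⌊L⌋₊:ℝ)) ⌊L⌋₊ ⊆
      {s : ℝ | s ∈ Set.Icc (-L) L ∧ Metric.infDist (φ s ω) K < ε} := by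
    rintro s ⟨hs, hs1, hs2⟩
    refine ⟨⟨by linarith, by linarith⟩, ?_⟩
    have := hFt hs
    rw [Metric.mem_thickening_iff] at this
    obtain ⟨z, hz, hd⟩ := this
    exact lt_of_le_of_lt (Metric.infDist_le_dist_of_mem hz) hd
  refine lt_of_lt_of_le ?_ (measure_mono hsub)
  have h3 : c / (c - a) < L := by linarith
  rw [div_lt_iff₀ hd] at h3
  have h4 : a * (2 * L) < volume.real ({s | φ s ω ∈ V F} ∩ Set.Ioc (-(⌊L⌋₊:ℝ)) ⌊L⌋₊) := by
    refine lt_of_lt_of_le ?_ h1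
    have : (c:ℝ) * (L - 1) ≤ c * ⌊L⌋₊ := by gcongr; linarith
    show a * (2 * L) < (c:ℝ) * (2 * (⌊L⌋₊:ℝ))
    nlinarith
  have h5 : (1 - ε) * (2 * L) ≤ a * (2 * L) := by gcongr
  have h6 : 0 ≤ a * (2 * L) := by positivity
  refine lt_of_le_of_lt (ENNReal.ofReal_le_ofReal h5) ?_
  exact (ENNReal.ofReal_lt_iff_lt_toReal h6 (measure_ne_top_of_subset Set.inter_subset_right (by simp))).2 h4
end

section
/- Let G be the semidirect product ℝ ⋉ ℝ^k with underlying set ℝ × ℝ^k and multiplication (s, x)·(s', x') = (s + s', x + e^s · x'). Let φ : ℝ → G be a continuous group homomorphism, φ(t) = (α(t), x(t)), such that α is not identically zero. Then there exist v ∈ ℝ^k and a nonzero real number c such that (0, v) · φ(t) · (0, v)^{-1} = (c·t, 0) for every t ∈ ℝ. -/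
/-- Multiplication of the semidirect product `ℝ ⋉ ℝ^k`, where `s ∈ ℝ` acts on `ℝ^k` by
scaling by `e^s`: `(s, x)·(s', x') = (s + s', x + e^s · x')`. -/
noncomputable def gMul {k : ℕ} (p q : ℝ × (Fin k → ℝ)) : ℝ × (Fin k → ℝ) :=
  (p.1 + q.1, p.2 + Real.exp p.1 • q.2)

/-- any continuous one-parameter subgroup of `ℝ ⋉ ℝ^k` whose first component is
not identically zero is conjugate, by an element `(0, v)`, to `t ↦ (c·t, 0)` for some `c ≠ 0`. -/
theorem one_parameter_subgroup_conjugate (k : ℕ) (φ : ℝ → ℝ × (Fin k → ℝ))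
    (hcont : Continuous φ) (h0 : φ 0 = (0, 0))
    (hadd : ∀ s t : ℝ, φ (s + t) = gMul (φ s) (φ t))
    (hα : ∃ t : ℝ, (φ t).1 ≠ 0) :
    ∃ (v : Fin k → ℝ) (c : ℝ), c ≠ 0 ∧
      ∀ t : ℝ, gMul (gMul (0, v) (φ t)) (0, -v) = ((c * t, 0) : ℝ × (Fin k → ℝ)) := by
  obtain ⟨a, ha⟩ := hα
  have h1 : ∀ s t : ℝ, (φ (s + t)).1 = (φ s).1 + (φ t).1 := fun s t => by rw [hadd]; rfl
  have h2 : ∀ s t : ℝ, (φ (s + t)).2 = (φ s).2 + Real.exp (φ s).1 • (φ t).2 :=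
    fun s t => by rw [hadd]; rfl
  let f : ℝ →+ ℝ := ⟨⟨fun t => (φ t).1, by simp [h0]⟩, h1⟩
  have hf : Continuous f := hcont.fst
  have hlin : ∀ t : ℝ, (φ t).1 = (φ 1).1 * t := by
    intro t
    have h := map_real_smul f hf t 1
    simp only [smul_eq_mul, mul_one] at h
    rw [mul_comm]
    exact h
  have he : 1 - Real.exp (φ a).1 ≠ 0 := by
    intro h
    apply ha
    rw [← Real.exp_eq_one_iff]
    linarith
  refine ⟨-((1 - Real.exp (φ a).1)⁻¹ • (φ a).2), (φ 1).1, ?_, ?_⟩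
  · intro h
    apply ha
    rw [hlin a, h, zero_mul]
  · intro t
    have hc := h2 a t
    rw [add_comm a t, h2 t a] at hc
    refine Prod.ext ?_ ?_
    · simp only [gMul]
      rw [hlin t]
      ring
    · funext i
      have hi := congrFun hc i
      simp only [gMul, Pi.add_apply, Pi.smul_apply, Pi.neg_apply, smul_eq_mul, Pi.zero_apply,
        Real.exp_zero, zero_add, one_mul] at hi ⊢
      field_simp
      linarith
end

section
/- For every odd integer n ≥ 3, the identity ∑_{j=1}^{(n-1)/2} 1 / sin²( π(2j-1)/n ) = (n² - 1)/6 holds. -/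
open Polynomial Polynomial.Chebyshev in
theorem sum_inv_one_sub_cos (N : ℕ) :
    ∑ k ∈ Finset.range N, 1 / (1 - Real.cos (((k : ℝ) + 1) * Real.pi / ((N : ℝ) + 1)))
      = ((N : ℝ) + 2) * N / 3 := by
  have hnd := (Finset.range N).nodup_map_iff_injOn.mp (roots_U_real_nodup N)
  have hs : (U ℝ (N : ℤ)).Splits := by
    rw [splits_iff_card_roots, roots_U_real, natDegree_U_natCast, Finset.card_val,
      Finset.card_image_of_injOn hnd, Finset.card_range]
  have h1 : (U ℝ (N : ℤ)).eval 1 = (N : ℝ) + 1 := by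
    rw [U_eval_one]; push_cast; ring
  have hpos : (N : ℝ) + 1 ≠ 0 := by positivity
  have h2 := hs.eval_derivative_div_eval_of_ne_zero (x := 1) (by rw [h1]; exact hpos)
  rw [roots_U_real, derivative_U_eval_one_eq_div, h1] at h2
  have h3 := Finset.sum_image (f := fun z : ℝ => 1 / (1 - z)) hnd
  rw [← h3]
  refine Eq.trans h2.symm ?_
  push_cast
  field_simp

theorem sum_range_two_mul_pair (f : ℕ → ℝ) (m : ℕ) :
    ∑ k ∈ Finset.range (2 * m), f k = ∑ i ∈ Finset.range m, (f (2 * i) + f (2 * i + 1)) := by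
  induction m with
  | zero => simp
  | succ m ih =>
    rw [show 2 * (m + 1) = 2 * m + 1 + 1 by ring, Finset.sum_range_succ, Finset.sum_range_succ,
      Finset.sum_range_succ, ih]
    ring

/-- Veech's identity: for odd `n ≥ 3`,
`∑_{j=1}^{(n-1)/2} 1 / sin²(π(2j-1)/n) = (n² - 1)/6`. -/
theorem sum_inv_sin_sq (n : ℕ) (hodd : Odd n) (hn : 3 ≤ n) :
    ∑ j ∈ Finset.Icc 1 ((n - 1) / 2),
        1 / Real.sin (Real.pi * (2 * (j : ℝ) - 1) / n) ^ 2 = ((n : ℝ) ^ 2 - 1) / 6 := by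
  obtain ⟨m, rfl⟩ := hodd
  have hm : (2 * m + 1 - 1) / 2 = m := by omega
  rw [hm, ← Finset.Ico_succ_right_eq_Icc, Finset.sum_Ico_eq_sum_range]
  have h := sum_inv_one_sub_cos (2 * m)
  rw [sum_range_two_mul_pair, Finset.sum_add_distrib,
    ← Finset.sum_range_reflect (fun i => 1 / (1 - Real.cos ((((2 * i + 1 : ℕ) : ℝ) + 1) * Real.pi /
      (((2 * m : ℕ) : ℝ) + 1)))), ← Finset.sum_add_distrib] at h
  have key : ∀ i ∈ Finset.range m,
      1 / (1 - Real.cos ((((2 * i : ℕ) : ℝ) + 1) * Real.pi / (((2 * m : ℕ) : ℝ) + 1))) +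
      1 / (1 - Real.cos ((((2 * (m - 1 - i) + 1 : ℕ) : ℝ) + 1) * Real.pi /
        (((2 * m : ℕ) : ℝ) + 1))) =
      2 * (1 / Real.sin (Real.pi * (2 * ((1 + i : ℕ) : ℝ) - 1) / ((2 * m + 1 : ℕ) : ℝ)) ^ 2) := by
    intro i hi
    have hi' := Finset.mem_range.mp hi
    have hmr : (0 : ℝ) < 2 * (m : ℝ) + 1 := by positivity
    have hc : ((2 * (m - 1 - i) + 1 : ℕ) : ℝ) = 2 * m - 1 - 2 * i := by
      have : 2 * (m - 1 - i) + 1 + 1 + 2 * i = 2 * m := by omega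
      have := congrArg (Nat.cast : ℕ → ℝ) this
      push_cast at this ⊢
      linarith
    rw [hc]
    push_cast
    set x : ℝ := (2 * (i : ℝ) + 1) * Real.pi / (2 * m + 1) with hx
    have e1 : (2 * (m : ℝ) - 1 - 2 * i + 1) * Real.pi / (2 * m + 1) = Real.pi - x := by
      rw [hx]; field_simp; ring
    have e2 : Real.pi * (2 * (1 + (i : ℝ)) - 1) / (2 * m + 1) = x := by
      rw [hx]; ring
    rw [e1, e2, Real.cos_pi_sub]
    have hsin : 0 < Real.sin x := by
      apply Real.sin_pos_of_pos_of_lt_pi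
      · have := Real.pi_pos
        positivity
      · rw [hx, div_lt_iff₀ hmr]
        have : (i : ℝ) < m := by exact_mod_cast hi'
        nlinarith [Real.pi_pos]
    have hsq : Real.sin x ^ 2 = (1 - Real.cos x) * (1 + Real.cos x) := by
      rw [Real.sin_sq]; ring
    have hne : (1 - Real.cos x) * (1 + Real.cos x) ≠ 0 := by
      rw [← hsq]; positivity
    have ha := left_ne_zero_of_mul hne
    have hb := right_ne_zero_of_mul hne
    rw [hsq, sub_neg_eq_add]
    field_simp
    ring
  rw [Finset.sum_congr rfl key, ← Finset.mul_sum] at h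
  push_cast at h ⊢
  simp only [Order.succ_eq_add_one, add_tsub_cancel_right] at h ⊢
  linarith
end

section
/- Let n ≥ 5 be an odd integer, and for 1 ≤ j ≤ (n-1)/2 set h_j = 4 sin(π(2j-1)/n) cos(π/n) and w_j = 2 sin(π(2j-1)/n) sin(π/n). Then ∑_{j=1}^{(n-1)/2} 1/(h_j · w_j) = (n² - 1) / ( 48 sin(π/n) cos(π/n) ). -/
open Finset in
lemma aux_cos_sum (t : ℝ) (N : ℕ) :
    2 * Real.sin t * ∑ r ∈ range N, Real.cos (2 * r * t) = Real.sin ((2 * N - 1) * t) + Real.sin t := by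
  induction N with
  | zero => simp
  | succ N ih =>
    rw [sum_range_succ, mul_add, ih]
    push_cast
    rw [show (2 * (N : ℝ) - 1) * t = 2 * N * t - t by ring,
      show (2 * ((N : ℝ) + 1) - 1) * t = 2 * N * t + t by ring, Real.sin_sub, Real.sin_add]
    ring

open Finset in
lemma aux_weighted (n t : ℝ) (N : ℕ) :
    4 * Real.sin t ^ 2 * ∑ r ∈ range N, ((r : ℝ) * (n - r)) * Real.cos (2 * r * t) =
      2 * ∑ r ∈ range N, Real.cos (2 * r * t) + N * (n - N) * Real.cos (2 * N * t - 2 * t)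
        - (N - 1) * (n - (N - 1)) * Real.cos (2 * N * t) - (n + 1) := by
  induction N with
  | zero => simp
  | succ N ih =>
    rw [sum_range_succ, sum_range_succ, mul_add, ih]
    push_cast
    rw [show 2 * ((N : ℝ) + 1) * t - 2 * t = 2 * N * t by ring,
      show 2 * ((N : ℝ) + 1) * t = 2 * N * t + 2 * t by ring, Real.cos_sub, Real.cos_add,
      Real.cos_two_mul t, Real.cos_sq']
    ring

open Finset in
lemma aux_odd_cos (a : ℝ) (m : ℕ) :
    2 * Real.sin a * ∑ j ∈ Icc 1 m, Real.cos ((2 * j - 1) * a) = Real.sin (2 * m * a) := by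
  induction m with
  | zero => simp
  | succ m ih =>
    rw [sum_Icc_succ_top (by omega), mul_add, ih]
    push_cast
    rw [show (2 * ((m : ℝ) + 1) - 1) * a = 2 * m * a + a by ring,
      show 2 * ((m : ℝ) + 1) * a = (2 * m * a + a) + a by ring,
      show 2 * (m : ℝ) * a = (2 * m * a + a) - a by ring]
    generalize 2 * (m : ℝ) * a + a = b
    rw [sub_add_cancel, Real.sin_sub, Real.sin_add]
    ring

lemma aux_sin_ne (n k : ℕ) (hn : 0 < n) (hk : ¬ n ∣ k) : Real.sin (Real.pi * k / n) ≠ 0 := by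
  intro h
  rw [Real.sin_eq_zero_iff] at h
  obtain ⟨z, hz⟩ := h
  have hn' : (n : ℝ) ≠ 0 := by positivity
  have h2 : (z : ℝ) * n = k := by
    field_simp at hz
    exact hz
  have h3 : z * (n : ℤ) = k := by exact_mod_cast h2
  exact hk (Int.natCast_dvd_natCast.mp ⟨z, by rw [← h3]; ring⟩)

open Finset in
lemma aux_csc (n k : ℕ) (hn : 0 < n) (hk : ¬ n ∣ k) :
    1 / Real.sin (Real.pi * k / n) ^ 2 =
      -(2 / n) * ∑ r ∈ range n, ((r : ℝ) * (n - r)) * Real.cos (2 * r * (Real.pi * k / n)) := by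
  have hs := aux_sin_ne n k hn hk
  have hn' : (n : ℝ) ≠ 0 := by positivity
  have h1 := aux_cos_sum (Real.pi * k / n) n
  have h2 := aux_weighted n (Real.pi * k / n) n
  have e : 2 * (n : ℝ) * (Real.pi * k / n) = k * (2 * Real.pi) := by field_simp
  rw [sub_mul, e, one_mul, Real.sin_nat_mul_two_pi_sub, neg_add_cancel] at h1
  have h3 := (mul_eq_zero.mp h1).resolve_left (mul_ne_zero two_ne_zero hs)
  rw [h3, e, Real.cos_nat_mul_two_pi] at h2
  generalize (∑ r ∈ range n, ((r : ℝ) * (n - r)) * Real.cos (2 * r * (Real.pi * k / n))) = S at *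
  field_simp
  linarith

open Finset in
lemma aux_poly (n : ℝ) (N : ℕ) :
    ∑ r ∈ range N, (r : ℝ) * (n - r) = n * (N * (N - 1)) / 2 - N * (N - 1) * (2 * N - 1) / 6 := by
  induction N with
  | zero => simp
  | succ N ih => rw [sum_range_succ, ih]; push_cast; ring

open Finset in
lemma aux_main (m : ℕ) :
    ∑ j ∈ Icc 1 m, 1 / Real.sin (Real.pi * (2 * (j : ℝ) - 1) / (2 * m + 1 : ℕ)) ^ 2 =
      (((2 * m + 1 : ℕ) : ℝ) ^ 2 - 1) / 6 := by
  set n := 2 * m + 1 with hn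
  have hn' : (n : ℝ) ≠ 0 := by positivity
  have h1 : ∀ j ∈ Icc 1 m, 1 / Real.sin (Real.pi * (2 * (j : ℝ) - 1) / n) ^ 2 =
      -(2 / n) * ∑ r ∈ range n, ((r : ℝ) * (n - r)) *
        Real.cos ((2 * j - 1) * (Real.pi * (2 * r : ℕ) / n)) := by
    intro j hj
    rw [mem_Icc] at hj
    have := aux_csc n (2 * j - 1) (by omega) (Nat.not_dvd_of_pos_of_lt (by omega) (by omega))
    rw [Nat.cast_sub (by omega)] at this
    push_cast at this
    rw [this]
    congr 1
    apply sum_congr rfl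
    intro r _
    congr 2
    push_cast
    ring
  rw [sum_congr rfl h1, ← mul_sum, sum_comm]
  have h2 : ∀ r ∈ range n, ∑ j ∈ Icc 1 m, ((r : ℝ) * (n - r)) *
        Real.cos ((2 * j - 1) * (Real.pi * (2 * r : ℕ) / n)) = ((r : ℝ) * (n - r)) * (-1 / 2) := by
    intro r hr
    rw [mem_range] at hr
    rw [← mul_sum]
    rcases Nat.eq_zero_or_pos r with h0 | h0
    · simp [h0]
    congr 1
    have hd : ¬ n ∣ 2 * r := by
      intro hd
      have hc : Nat.Coprime n 2 := by rw [Nat.coprime_two_right]; exact ⟨m, hn⟩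
      exact Nat.not_dvd_of_pos_of_lt h0 hr (hc.dvd_of_dvd_mul_left hd)
    have hs := aux_sin_ne n (2 * r) (by omega) hd
    have h3 := aux_odd_cos (Real.pi * (2 * r : ℕ) / n) m
    have e : 2 * (m : ℝ) * (Real.pi * (2 * r : ℕ) / n) =
        r * (2 * Real.pi) - Real.pi * (2 * r : ℕ) / n := by
      have : 2 * (m : ℝ) = n - 1 := by rw [hn]; push_cast; ring
      rw [this]; push_cast; field_simp
    rw [e, Real.sin_nat_mul_two_pi_sub] at h3
    apply mul_left_cancel₀ (mul_ne_zero two_ne_zero hs)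
    rw [h3]; ring
  rw [sum_congr rfl h2, ← sum_mul, aux_poly]
  field_simp
  ring


/-- with `h_j = 4 sin(π(2j-1)/n) cos(π/n)` and `w_j = 2 sin(π(2j-1)/n) sin(π/n)`,
for odd `n ≥ 5` one has `∑_{j=1}^{(n-1)/2} 1/(h_j w_j) = (n² - 1)/(48 sin(π/n) cos(π/n))`. -/
theorem sum_inv_height_width (n : ℕ) (hodd : Odd n) (hn : 5 ≤ n) :
    ∑ j ∈ Finset.Icc 1 ((n - 1) / 2),
        1 / ((4 * Real.sin (Real.pi * (2 * (j : ℝ) - 1) / n) * Real.cos (Real.pi / n)) *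
            (2 * Real.sin (Real.pi * (2 * (j : ℝ) - 1) / n) * Real.sin (Real.pi / n))) =
      ((n : ℝ) ^ 2 - 1) / (48 * Real.sin (Real.pi / n) * Real.cos (Real.pi / n)) := by
  obtain ⟨m, rfl⟩ := hodd
  have hm : (2 * m + 1 - 1) / 2 = m := by omega
  rw [hm]
  have key := aux_main m
  generalize ((2 * m + 1 : ℕ) : ℝ) = n at *
  have h1 : ∀ j ∈ Finset.Icc 1 m,
      1 / ((4 * Real.sin (Real.pi * (2 * (j : ℝ) - 1) / n) * Real.cos (Real.pi / n)) *
            (2 * Real.sin (Real.pi * (2 * (j : ℝ) - 1) / n) * Real.sin (Real.pi / n))) =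
      1 / Real.sin (Real.pi * (2 * (j : ℝ) - 1) / n) ^ 2 *
        (1 / (8 * Real.sin (Real.pi / n) * Real.cos (Real.pi / n))) := by
    intro j _
    rw [← one_div_mul_one_div_rev, div_mul_div_comm, div_mul_div_comm]
    congr 1 <;> ring
  rw [Finset.sum_congr rfl h1, ← Finset.sum_mul, key, div_mul_div_comm]
  congr 1 <;> ring
end
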